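/- arXiv:2002.10704 — 2 statements merged into one kernel-verified Lean document; each statement's English description precedes it below -/
import Mathlib

section
/- Let f_1,…,f_n be MRF (submodular dichotomous) valuations on a finite item set M, with the agents ordered 1,…,n. Then there exists a single non-redundant allocation A that simultaneously maximizes the welfare of every prefix of agents: for every i ∈ {1,…,n}, Σ_{j=1}^{i} |A_j| = W({1,…,i}), where W(S) denotes the maximum over all allocations B of Σ_{j∈S} f_j(B_j). -/
open Finset
open scoped Classical

variable {n : ℕ} {I : Type*} [DecidableEq I] [Fintype I]

/-- An allocation assigns pairwise disjoint bundles of items to the agents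
(items may remain unallocated). -/
def IsAllocation (A : Fin n → Finset I) : Prop :=
  ∀ i j : Fin n, i ≠ j → Disjoint (A i) (A j)

/-- The vector of utilities of an allocation under a profile of valuations. -/
def util {α : Type*} (f : Fin n → Finset I → α) (A : Fin n → Finset I) : Fin n → α :=
  fun i => f i (A i)

/-- The entries of the vector `u`, sorted in nondecreasing order. -/
noncomputable def sortedVec {α : Type*} [LinearOrder α] (u : Fin n → α) : List α :=
  (Finset.univ.val.map u).sort (· ≤ ·)

/-- `u` Lorenz-dominates `v`: for each `k`, the sum of the `k` smallest entries of `u`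
is at least the sum of the `k` smallest entries of `v`. -/
def LorenzGE {α : Type*} [LinearOrder α] [AddCommMonoid α] (u v : Fin n → α) : Prop :=
  ∀ k : ℕ, ((sortedVec v).take k).sum ≤ ((sortedVec u).take k).sum

/-- A matroid rank function: a normalized submodular valuation with dichotomous marginals. -/
structure IsMRF (f : Finset I → ℕ) : Prop where
  empty : f ∅ = 0
  submod : ∀ S T : Finset I, S ⊆ T → ∀ a : I,
      f (insert a T) + f S ≤ f (insert a S) + f T
  dichot : ∀ (S : Finset I) (a : I), f (insert a S) = f S ∨ f (insert a S) = f S + 1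

/-- Non-redundancy: removing any item from any agent's bundle strictly decreases its value. -/
def NonRedundant (f : Fin n → Finset I → ℕ) (A : Fin n → Finset I) : Prop :=
  ∀ i : Fin n, ∀ a ∈ A i, f i ((A i).erase a) < f i (A i)

/-- A Lorenz dominating allocation. -/
def LorenzDominating (f : Fin n → Finset I → ℕ) (A : Fin n → Finset I) : Prop :=
  ∀ B : Fin n → Finset I, IsAllocation B → LorenzGE (util f A) (util f B)

/-- The σ-perturbed utilities: agent `i` gets `f i (A i) + σ(i)/n²`, where the priority
`σ(i)` ranges over `{1,…,n}`. -/
noncomputable def pUtil (σ : Equiv.Perm (Fin n)) (f : Fin n → Finset I → ℕ)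
    (A : Fin n → Finset I) : Fin n → ℝ :=
  fun i => (f i (A i) : ℝ) + (((σ i : ℕ) : ℝ) + 1) / (n : ℝ) ^ 2

/-- A σ-Lorenz dominating allocation. -/
def SigmaLorenzDom (σ : Equiv.Perm (Fin n)) (f : Fin n → Finset I → ℕ)
    (A : Fin n → Finset I) : Prop :=
  ∀ B : Fin n → Finset I, IsAllocation B → LorenzGE (pUtil σ f A) (pUtil σ f B)

/-- Restriction of a valuation to a subset `D` of the items. -/
def restrictVal (f : Finset I → ℕ) (D : Finset I) : Finset I → ℕ := fun S => f (S ∩ D)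

/-- A partition of all the items into `n` (possibly empty) bundles. -/
def IsPartition (P : Fin n → Finset I) : Prop :=
  (∀ i j : Fin n, i ≠ j → Disjoint (P i) (P j)) ∧ ∀ a : I, ∃ j, a ∈ P j

/-- An XOS valuation: the pointwise maximum of a finite nonempty family of
nonnegative additive valuations. -/
def IsXOS (f : Finset I → ℝ) : Prop :=
  ∃ (k : ℕ) (w : Fin (k + 1) → I → ℝ),
    (∀ t a, 0 ≤ w t a) ∧
    ∀ S : Finset I, f S = Finset.univ.sup' Finset.univ_nonempty (fun t => ∑ a ∈ S, w t a)

/-- A dichotomous valuation (real-valued version). -/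
def IsDichotomousR (f : Finset I → ℝ) : Prop :=
  ∀ (S : Finset I) (a : I), f (insert a S) = f S ∨ f (insert a S) = f S + 1

/-- Envy-freeness up to one good. -/
def EF1 (f : Fin n → Finset I → ℝ) (A : Fin n → Finset I) : Prop :=
  ∀ i j : Fin n, f i (A j) ≤ f i (A i) ∨ ∃ e ∈ A j, f i ((A j).erase e) ≤ f i (A i)

/-- The maximum welfare attainable by a set `S` of agents. -/
noncomputable def maxWelfare (f : Fin n → Finset I → ℕ) (S : Finset (Fin n)) : ℕ :=
  Finset.sup (Finset.univ.filter fun B : Fin n → Finset I => IsAllocation B)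
    (fun B => ∑ j ∈ S, f j (B j))

/-- An allocation extended with index `none` for the set of unallocated items. -/
def extAlloc (A : Fin n → Finset I) : Option (Fin n) → Finset I
  | none => Finset.univ \ Finset.univ.biUnion A
  | some i => A i

set_option linter.unusedSectionVars false

namespace IsMRF

variable {f : Finset I → ℕ}

lemma mono (hf : IsMRF f) {S T : Finset I} (h : S ⊆ T) : f S ≤ f T := by
  have key : ∀ R : Finset I, f S ≤ f (S ∪ R) := by
    intro R
    induction R using Finset.induction_on with
    | empty => simp
    | insert a R _ ih =>
      rw [Finset.union_insert]
      rcases hf.dichot (S ∪ R) a with h | h <;> omega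
  simpa [Finset.union_eq_right.mpr h] using key T

lemma union_le (hf : IsMRF f) (S R : Finset I) : f (S ∪ R) ≤ f S + R.card := by
  induction R using Finset.induction_on with
  | empty => simp
  | insert a R ha ih =>
    rw [Finset.union_insert, Finset.card_insert_of_notMem ha]
    rcases hf.dichot (S ∪ R) a with h | h <;> omega

lemma le_card (hf : IsMRF f) (S : Finset I) : f S ≤ S.card := by
  simpa [hf.empty] using hf.union_le ∅ S

/-- Subsets of independent sets are independent. -/
lemma indep_subset (hf : IsMRF f) {S T : Finset I} (hT : f T = T.card) (h : S ⊆ T) :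
    f S = S.card := by
  have h1 := hf.union_le S (T \ S)
  rw [Finset.union_sdiff_of_subset h] at h1
  have h2 := Finset.card_sdiff_add_card_eq_card h
  have h3 := hf.le_card S
  omega

lemma union_eq_of_forall_insert_eq (hf : IsMRF f) {T R : Finset I}
    (h : ∀ a ∈ R, f (insert a T) = f T) : f (T ∪ R) = f T := by
  induction R using Finset.induction_on with
  | empty => simp
  | insert a R _ ih =>
    rw [Finset.union_insert]
    have h1 := ih fun b hb => h b (Finset.mem_insert_of_mem hb)
    have h2 := h a (Finset.mem_insert_self a R)
    have h3 := hf.submod T (T ∪ R) Finset.subset_union_left a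
    have h4 := hf.mono (Finset.subset_insert a (T ∪ R))
    omega

/-- Every independent subset of `S` extends to a basis of `S`. -/
lemma exists_basis (hf : IsMRF f) {R S : Finset I} (hRS : R ⊆ S) (hR : f R = R.card) :
    ∃ T, R ⊆ T ∧ T ⊆ S ∧ f T = T.card ∧ f S = T.card := by
  obtain ⟨T, hT, hmax⟩ := Finset.exists_max_image
    (S.powerset.filter fun T => R ⊆ T ∧ f T = T.card) Finset.card
    ⟨R, by simp [hRS, hR]⟩
  simp only [Finset.mem_filter, Finset.mem_powerset] at hT hmax
  obtain ⟨hTS, hRT, hTi⟩ := hT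
  refine ⟨T, hRT, hTS, hTi, ?_⟩
  have h := hf.union_eq_of_forall_insert_eq (T := T) (R := S) fun a ha => by
    by_contra hne
    have hval := (hf.dichot T a).resolve_left hne
    have haT : a ∉ T := fun haT => hne (by rw [Finset.insert_eq_of_mem haT])
    have hc := Finset.card_insert_of_notMem haT
    have := hmax (insert a T) ⟨Finset.insert_subset ha hTS,
      hRT.trans (Finset.subset_insert a T), by omega⟩
    omega
  rw [Finset.union_eq_right.mpr hTS] at h
  omega

/-- An element `x` of an independent set `B` can be brought into an independent set `A`
either freely or in exchange for an element outside `B`. -/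
lemma exists_exchange (hf : IsMRF f) {A B : Finset I} (hA : f A = A.card) (hB : f B = B.card)
    {x : I} (hxB : x ∈ B) :
    ∃ T, T ⊆ insert x A ∧ insert x (A ∩ B) ⊆ T ∧ f T = T.card ∧ A.card ≤ T.card := by
  obtain ⟨T, h1, h2, h3, h4⟩ := hf.exists_basis
    (R := insert x (A ∩ B)) (S := insert x A)
    (Finset.insert_subset_insert x Finset.inter_subset_left)
    (hf.indep_subset hB (Finset.insert_subset hxB Finset.inter_subset_right))
  have := hf.mono (Finset.subset_insert x A)
  exact ⟨T, h2, h1, h3, by omega⟩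

end IsMRF

/-- Any allocation with independent bundles can be changed, without shrinking the bundle of any
agent in `S`, so that the agents in `S` jointly hold at least as many items as under `B`. -/
lemma exists_alloc_card_ge {f : Fin n → Finset I → ℕ} (hf : ∀ i, IsMRF (f i))
    (S : Finset (Fin n)) {A₀ B : Fin n → Finset I}
    (hA₀ : IsAllocation A₀) (hA₀f : ∀ i, f i (A₀ i) = (A₀ i).card)
    (hB : IsAllocation B) (hBf : ∀ i, f i (B i) = (B i).card) :
    ∃ A, IsAllocation A ∧ (∀ i, f i (A i) = (A i).card) ∧
      (∀ j ∈ S, (A₀ j).card ≤ (A j).card) ∧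
      ∑ j ∈ S, (B j).card ≤ ∑ j ∈ S, (A j).card := by
  obtain ⟨A, hA, hmax⟩ := Finset.exists_max_image
    (Finset.univ.filter fun A : Fin n → Finset I =>
      IsAllocation A ∧ (∀ i, f i (A i) = (A i).card) ∧
      (∀ j ∈ S, (A₀ j).card ≤ (A j).card) ∧ ∀ j ∉ S, A j = ∅)
    (fun A => ∑ j, (A j ∩ B j).card)
    ⟨fun j => if j ∈ S then A₀ j else ∅, by
      simp only [Finset.mem_filter, Finset.mem_univ, true_and]
      refine ⟨fun i j hij => ?_, fun i => ?_, fun j hj => by simp [hj], fun j hj => by simp [hj]⟩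
      · have := hA₀ i j hij
        dsimp only
        split_ifs <;> simp [this]
      · split_ifs
        · exact hA₀f i
        · simp [(hf i).empty]⟩
  simp only [Finset.mem_filter, Finset.mem_univ, true_and] at hA hmax
  obtain ⟨hAa, hAf, hAc, hAe⟩ := hA
  refine ⟨A, hAa, hAf, hAc, ?_⟩
  rw [← Finset.card_biUnion fun i _ j _ hij => hB i j hij,
    ← Finset.card_biUnion fun i _ j _ hij => hAa i j hij]
  refine Finset.card_le_card fun x hx => ?_
  by_contra hxA
  have hxA' : ∀ j, x ∉ A j := fun j hj => by
    by_cases hjS : j ∈ S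
    · exact hxA (Finset.mem_biUnion.mpr ⟨j, hjS, hj⟩)
    · simp [hAe j hjS] at hj
  obtain ⟨i, hiS, hxi⟩ := Finset.mem_biUnion.mp hx
  obtain ⟨T, hTA, hTB, hTf, hTc⟩ := (hf i).exists_exchange (hAf i) (hBf i) hxi
  have hdisj : ∀ j, j ≠ i → Disjoint T (A j) := fun j hj =>
    Finset.disjoint_of_subset_left hTA
      (Finset.disjoint_insert_left.mpr ⟨hxA' j, hAa i j hj.symm⟩)
  have hle := hmax (Function.update A i T) ⟨fun j k hjk => ?_, fun j => ?_, fun j hj => ?_,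
    fun j hj => ?_⟩
  · refine absurd hle (not_le.mpr (Finset.sum_lt_sum (fun j _ => ?_) ⟨i, Finset.mem_univ i, ?_⟩))
    · by_cases hj : j = i
      · subst hj
        rw [Function.update_self]
        refine Finset.card_le_card (Finset.subset_inter ?_ Finset.inter_subset_right)
        exact (Finset.subset_insert x _).trans hTB
      · rw [Function.update_of_ne hj]
    · rw [Function.update_self]
      refine Finset.card_lt_card (Finset.ssubset_iff.mpr ⟨x, fun h => hxA' i ?_, ?_⟩)
      · exact Finset.mem_of_mem_inter_left h
      · exact Finset.subset_inter hTB (Finset.insert_subset hxi Finset.inter_subset_right)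
  · by_cases hj : j = i
    · subst hj
      rw [Function.update_self, Function.update_of_ne hjk.symm]
      exact hdisj k hjk.symm
    · rw [Function.update_of_ne hj]
      by_cases hk : k = i
      · subst hk
        rw [Function.update_self]
        exact (hdisj j hj).symm
      · rw [Function.update_of_ne hk]
        exact hAa j k hjk
  · by_cases hj : j = i
    · subst hj
      rwa [Function.update_self]
    · rw [Function.update_of_ne hj]
      exact hAf j
  · by_cases hj' : j = i
    · subst hj'
      rw [Function.update_self]
      exact (hAc j hj).trans hTc
    · rw [Function.update_of_ne hj']
      exact hAc j hj
  · rw [Function.update_of_ne (show j ≠ i from fun h => hj (h ▸ hiS))]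
    exact hAe j hj

/-- The maximum welfare is attained by an allocation with independent bundles. -/
lemma exists_indep_alloc_card_eq_maxWelfare {f : Fin n → Finset I → ℕ} (hf : ∀ i, IsMRF (f i))
    (S : Finset (Fin n)) :
    ∃ B, IsAllocation B ∧ (∀ i, f i (B i) = (B i).card) ∧
      ∑ j ∈ S, (B j).card = maxWelfare f S := by
  obtain ⟨B, hB, hBS⟩ := Finset.exists_mem_eq_sup
    (Finset.univ.filter fun B : Fin n → Finset I => IsAllocation B)
    ⟨fun _ => ∅, Finset.mem_filter.mpr ⟨Finset.mem_univ _, by simp [IsAllocation]⟩⟩ (fun B => ∑ j ∈ S, f j (B j))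
  replace hB := (Finset.mem_filter.mp hB).2
  choose T _ hTB hTf hBT using fun i =>
    (hf i).exists_basis (Finset.empty_subset (B i)) (by simp [(hf i).empty])
  refine ⟨T, fun i j hij => Finset.disjoint_of_subset_left (hTB i)
    (Finset.disjoint_of_subset_right (hTB j) (hB i j hij)), hTf, ?_⟩
  rw [maxWelfare, hBS]
  exact Finset.sum_congr rfl fun j _ => (hBT j).symm

lemma le_maxWelfare (f : Fin n → Finset I → ℕ) (S : Finset (Fin n)) {A : Fin n → Finset I}
    (hA : IsAllocation A) : ∑ j ∈ S, f j (A j) ≤ maxWelfare f S :=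
  Finset.le_sup (f := fun B : Fin n → Finset I => ∑ j ∈ S, f j (B j))
    (Finset.mem_filter.mpr ⟨Finset.mem_univ A, hA⟩)

/-- The greedy lemma: for MRF valuations there is a single non-redundant allocation
that simultaneously attains the maximum welfare of every prefix of agents. -/
theorem greedy_prefix_welfare
    {n : ℕ} {I : Type*} [DecidableEq I] [Fintype I]
    (f : Fin n → Finset I → ℕ) (hf : ∀ i, IsMRF (f i)) :
    ∃ A : Fin n → Finset I, IsAllocation A ∧ NonRedundant f A ∧
      ∀ i : Fin n,
        ∑ j ∈ Finset.univ.filter (fun j => j ≤ i), (A j).card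
          = maxWelfare f (Finset.univ.filter (fun j => j ≤ i)) := by
  have key : ∀ m : ℕ, m ≤ n → ∃ A : Fin n → Finset I, IsAllocation A ∧
      (∀ i, f i (A i) = (A i).card) ∧ ∀ i : Fin n, (i : ℕ) < m →
        maxWelfare f (Finset.univ.filter (fun j => j ≤ i)) ≤
          ∑ j ∈ Finset.univ.filter (fun j => j ≤ i), (A j).card := by
    intro m
    induction m with
    | zero => exact fun _ => ⟨fun _ => ∅, by simp [IsAllocation], by simp [(hf _).empty], by simp⟩
    | succ m ih =>
      intro hm
      obtain ⟨A₀, hA₀, hA₀f, hA₀m⟩ := ih (by omega)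
      let k : Fin n := ⟨m, hm⟩
      obtain ⟨B, hB, hBf, hBk⟩ :=
        exists_indep_alloc_card_eq_maxWelfare hf (Finset.univ.filter (fun j => j ≤ k))
      obtain ⟨A, hA, hAf, hAc, hAB⟩ := exists_alloc_card_ge hf _ hA₀ hA₀f hB hBf
      refine ⟨A, hA, hAf, fun i hi => ?_⟩
      rcases Nat.lt_succ_iff_lt_or_eq.mp hi with hi | hi
      · refine (hA₀m i hi).trans (Finset.sum_le_sum fun j hj => hAc j ?_)
        have hj := (Finset.mem_filter.mp hj).2
        exact Finset.mem_filter.mpr ⟨Finset.mem_univ j, hj.trans (show i ≤ k from hi.le)⟩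
      · obtain rfl : i = k := Fin.ext hi
        exact hBk ▸ hAB
  obtain ⟨A, hA, hAf, hAm⟩ := key n le_rfl
  refine ⟨A, hA, fun i a ha => ?_, fun i => le_antisymm ?_ (hAm i i.isLt)⟩
  · rw [(hf i).indep_subset (hAf i) (Finset.erase_subset a _), hAf i]
    exact Finset.card_erase_lt_of_mem ha
  · simpa only [hAf] using le_maxWelfare f (Finset.univ.filter (fun j => j ≤ i)) hA
end

section
/- (Monotonicity.) Fix a priority order σ, MRF valuations f_1,…,f_n on a finite item set M, an agent p, and sets S ⊆ T ⊆ M. Let A be a non-redundant σ-Lorenz dominating allocation for the profile in which f_p is replaced by the restricted valuation f_{p|S}, and let B be a non-redundant σ-Lorenz dominating allocation for the profile in which f_p is replaced by f_{p|T} (other valuations unchanged in both cases). Then |B_p| ≥ |A_p|; equivalently, f_p(B_p) ≥ f_p(A_p). -/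
open Finset
open scoped Classical

variable {n : ℕ} {I : Type*} [DecidableEq I] [Fintype I]

set_option linter.unusedSectionVars false

/-! ### Sums of truncated values and Lorenz domination -/

lemma sum_map_min_le_take (t : ℝ) (l : List ℝ) (k : ℕ) :
    (l.map (min t)).sum ≤ (l.take k).sum + ((l.length - k : ℕ) : ℝ) * t := by
  induction l generalizing k with
  | nil => simp
  | cons x l ih =>
    cases k with
    | zero =>
      have h := ih 0
      have hx := min_le_left t x
      simp at h ⊢
      linarith
    | succ k =>
      have h := ih k
      have hx := min_le_right t x
      simp at h ⊢
      linarith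

lemma exists_sum_map_min_eq_take (t : ℝ) (l : List ℝ) (hl : l.Pairwise (· ≤ ·)) :
    ∃ k, (l.map (min t)).sum = (l.take k).sum + ((l.length - k : ℕ) : ℝ) * t := by
  induction l with
  | nil => exact ⟨0, by simp⟩
  | cons x l ih =>
    rw [List.pairwise_cons] at hl
    by_cases hx : x < t
    · obtain ⟨k, hk⟩ := ih hl.2
      refine ⟨k + 1, ?_⟩
      simp only [List.map_cons, List.sum_cons, hk, min_eq_right hx.le, List.take_succ_cons,
        List.length_cons, Nat.add_sub_add_right]
      ring
    · refine ⟨0, ?_⟩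
      have hconst : (x :: l).map (min t) = (x :: l).map (fun _ => t) := by
        refine List.map_congr_left fun y hy => min_eq_left ?_
        rcases List.mem_cons.1 hy with rfl | hy
        · exact not_lt.1 hx
        · exact (not_lt.1 hx).trans (hl.1 y hy)
      rw [hconst]
      simp
      ring

lemma sum_map_sortedVec {n : ℕ} (g : ℝ → ℝ) (u : Fin n → ℝ) :
    ((sortedVec u).map g).sum = ∑ i, g (u i) := by
  rw [← Multiset.sum_coe, ← Multiset.map_coe, sortedVec, Multiset.sort_eq, Multiset.map_map]
  rfl

lemma length_sortedVec {n : ℕ} (u : Fin n → ℝ) : (sortedVec u).length = n := by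
  simp [sortedVec]

lemma LorenzGE.sum_min_le {n : ℕ} {u v : Fin n → ℝ} (h : LorenzGE u v) (t : ℝ) :
    ∑ i, min t (v i) ≤ ∑ i, min t (u i) := by
  obtain ⟨k, hk⟩ := exists_sum_map_min_eq_take t (sortedVec u) (Multiset.pairwise_sort _ _)
  have hv := sum_map_min_le_take t (sortedVec v) k
  rw [sum_map_sortedVec, length_sortedVec] at hk hv
  linarith [h k]

/-- A Lorenz dominating vector is not improved by raising a single entry. -/
lemma LorenzGE.not_raise {n : ℕ} {u v : Fin n → ℝ} (h : LorenzGE u v) {i : Fin n}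
    (hi : u i < v i) (hrest : ∀ j, j ≠ i → v j = u j) : False := by
  refine (h.sum_min_le (v i)).not_gt (Finset.sum_lt_sum (fun j _ => ?_) ⟨i, mem_univ i, ?_⟩)
  · by_cases hj : j = i
    · subst hj
      exact min_le_min_left _ hi.le
    · rw [hrest j hj]
  · rw [min_self, min_eq_right hi.le]
    exact hi

/-- A Lorenz dominating vector is not improved by a transfer from `k` to `i` after which
both entries exceed the former value of `i`. -/
lemma LorenzGE.not_transfer {n : ℕ} {u v : Fin n → ℝ} (h : LorenzGE u v) {i k : Fin n}
    (hi : u i < v i) (hk : u i < v k) (hrest : ∀ j, j ≠ i → j ≠ k → v j = u j) :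
    False := by
  refine (h.sum_min_le (min (v i) (v k))).not_gt
    (Finset.sum_lt_sum (fun j _ => ?_) ⟨i, mem_univ i, ?_⟩)
  · by_cases hj : j = i
    · subst hj
      exact min_le_min_left _ hi.le
    · by_cases hjk : j = k
      · subst hjk
        rw [min_eq_left (min_le_right _ _)]
        exact min_le_left _ _
      · rw [hrest j hj hjk]
  · rw [min_eq_left (min_le_left (v i) (v k)), min_eq_right (lt_min hi hk).le]
    exact lt_min hi hk

/-! ### Independent sets of a matroid rank function -/

namespace IsMRF

variable {r : Finset I → ℕ}

lemma le_insert (hr : IsMRF r) (X : Finset I) (a : I) : r X ≤ r (insert a X) := by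
  rcases hr.dichot X a with h | h <;> omega

lemma le_union (hr : IsMRF r) (X Y : Finset I) : r X ≤ r (X ∪ Y) := by
  induction Y using Finset.induction_on with
  | empty => simp
  | insert a Y _ ih =>
    rw [union_insert]
    exact ih.trans (hr.le_insert _ a)

lemma le_card_s10 (hr : IsMRF r) (X : Finset I) : r X ≤ X.card := by
  induction X using Finset.induction_on with
  | empty => simp [hr.empty]
  | insert a X ha ih =>
    rw [card_insert_of_notMem ha]
    rcases hr.dichot X a with h | h <;> omega

lemma eq_card_of_forall_erase_lt (hr : IsMRF r) {X : Finset I}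
    (hX : ∀ a ∈ X, r (X.erase a) < r X) : r X = X.card := by
  suffices h : ∀ Y : Finset I, Y ⊆ X → r Y = Y.card from h X Subset.rfl
  intro Y
  induction Y using Finset.induction_on with
  | empty => simp [hr.empty]
  | insert a Y ha ih =>
    intro hY
    obtain ⟨haX, hYX⟩ := insert_subset_iff.1 hY
    have hsub := hr.submod Y (X.erase a) (subset_erase.2 ⟨hYX, ha⟩) a
    rw [insert_erase haX] at hsub
    have hlt := hX a haX
    have hY := ih hYX
    rw [card_insert_of_notMem ha]
    rcases hr.dichot Y a with h | h <;> omega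

lemma erase_eq_card (hr : IsMRF r) {X : Finset I} (hX : r X = X.card) (a : I) :
    r (X.erase a) = (X.erase a).card := by
  by_cases ha : a ∈ X
  · have hd := hr.dichot (X.erase a) a
    rw [insert_erase ha] at hd
    have hc := card_erase_add_one ha
    have hle := hr.le_card_s10 (X.erase a)
    rcases hd with h | h <;> omega
  · rwa [erase_eq_of_notMem ha]

lemma union_eq_of_forall_insert_eq_s10 (hr : IsMRF r) {X Y : Finset I}
    (h : ∀ y ∈ Y, r (insert y X) = r X) : r (X ∪ Y) = r X := by
  induction Y using Finset.induction_on with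
  | empty => simp
  | insert a Y _ ih =>
    rw [union_insert]
    have hY := ih fun y hy => h y (mem_insert_of_mem hy)
    have hsub := hr.submod X (X ∪ Y) subset_union_left a
    have ha := h a (mem_insert_self a Y)
    have hle := hr.le_insert (X ∪ Y) a
    omega

/-- The augmentation property of independent sets. -/
lemma exists_insert_eq_card (hr : IsMRF r) {X Y : Finset I} (hX : r X = X.card)
    (hY : r Y = Y.card) (hXY : X.card < Y.card) :
    ∃ y ∈ Y, y ∉ X ∧ r (insert y X) = (insert y X).card := by
  by_contra! hcon
  have h : ∀ y ∈ Y, r (insert y X) = r X := by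
    intro y hy
    by_cases hyX : y ∈ X
    · rw [insert_eq_of_mem hyX]
    · have hne := hcon y hy hyX
      rw [card_insert_of_notMem hyX] at hne
      rcases hr.dichot X y with h | h <;> omega
  have hunion := hr.union_eq_of_forall_insert_eq_s10 h
  have hle := hr.le_union Y X
  rw [union_comm] at hle
  omega

lemma restrictVal (hr : IsMRF r) (D : Finset I) : IsMRF (restrictVal r D) where
  empty := by simp [_root_.restrictVal, hr.empty]
  submod X Y hXY a := by
    unfold _root_.restrictVal
    by_cases ha : a ∈ D
    · rw [insert_inter_of_mem ha, insert_inter_of_mem ha]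
      exact hr.submod _ _ (inter_subset_inter_right hXY) a
    · rw [insert_inter_of_notMem ha, insert_inter_of_notMem ha, add_comm]
  dichot X a := by
    unfold _root_.restrictVal
    by_cases ha : a ∈ D
    · rw [insert_inter_of_mem ha]
      exact hr.dichot _ a
    · rw [insert_inter_of_notMem ha]
      exact Or.inl rfl

lemma subset_of_restrictVal_eq_card (hr : IsMRF r) {D X : Finset I}
    (h : _root_.restrictVal r D X = X.card) : X ⊆ D := by
  have hle : X.card ≤ (X ∩ D).card := h ▸ hr.le_card_s10 (X ∩ D)
  exact inter_eq_left.1 (eq_of_subset_of_card_le inter_subset_left hle)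

end IsMRF

/-! ### Exchange between allocations with independent bundles -/

/-- An allocation in which every bundle is independent for its owner. -/
structure IsIndepAllocation {n : ℕ} (g : Fin n → Finset I → ℕ) (A : Fin n → Finset I) :
    Prop where
  alloc : IsAllocation A
  eq_card : ∀ i, g i (A i) = (A i).card

lemma NonRedundant.isIndepAllocation {n : ℕ} {g : Fin n → Finset I → ℕ}
    {A : Fin n → Finset I} (h : NonRedundant g A) (hg : ∀ i, IsMRF (g i))
    (hA : IsAllocation A) : IsIndepAllocation g A :=
  ⟨hA, fun i => (hg i).eq_card_of_forall_erase_lt (h i)⟩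

/-- The allocation obtained from `A` by giving item `x` to agent `k`. -/
def giveItem {n : ℕ} (A : Fin n → Finset I) (k : Fin n) (x : I) : Fin n → Finset I :=
  fun j => if j = k then insert x (A j) else (A j).erase x

lemma IsIndepAllocation.giveItem {n : ℕ} {g : Fin n → Finset I → ℕ}
    (hg : ∀ i, IsMRF (g i)) {A : Fin n → Finset I} (hA : IsIndepAllocation g A)
    {k : Fin n} {x : I} (hx : g k (insert x (A k)) = (insert x (A k)).card) :
    IsIndepAllocation g (giveItem A k x) where
  alloc i j hij := by
    have hd := disjoint_left.1 (hA.alloc i j hij)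
    refine disjoint_left.2 fun y hyi hyj => ?_
    unfold _root_.giveItem at hyi hyj
    split_ifs at hyi hyj with hi hj hj
    · exact hij (hi.trans hj.symm)
    · obtain ⟨hne, hyj⟩ := mem_erase.1 hyj
      exact hd ((mem_insert.1 hyi).resolve_left hne) hyj
    · obtain ⟨hne, hyi⟩ := mem_erase.1 hyi
      exact hd hyi ((mem_insert.1 hyj).resolve_left hne)
    · exact hd (mem_of_mem_erase hyi) (mem_of_mem_erase hyj)
  eq_card i := by
    unfold _root_.giveItem
    split_ifs with hi
    · subst hi
      exact hx
    · exact (hg i).erase_eq_card (hA.eq_card i) x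

/-- Giving an item to its owner in `C` increases the overlap with `C`. -/
lemma sum_card_inter_lt_giveItem {n : ℕ} {A C : Fin n → Finset I} (hC : IsAllocation C)
    {k : Fin n} {x : I} (hxC : x ∈ C k) (hxA : x ∉ A k) :
    ∑ j, (A j ∩ C j).card < ∑ j, (giveItem A k x j ∩ C j).card := by
  refine Finset.sum_lt_sum (fun j _ => ?_) ⟨k, mem_univ k, ?_⟩
  · unfold giveItem
    split_ifs with hj
    · exact card_le_card (inter_subset_inter_right (subset_insert _ _))
    · have hxj : x ∉ C j := disjoint_left.1 (hC k j (Ne.symm hj)) hxC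
      refine card_le_card fun y hy => ?_
      obtain ⟨hyA, hyC⟩ := mem_inter.1 hy
      exact mem_inter.2 ⟨mem_erase.2 ⟨fun h => hxj (h ▸ hyC), hyA⟩, hyC⟩
  · simp only [giveItem, if_true]
    rw [insert_inter_of_mem hxC, card_insert_of_notMem fun h => hxA (mem_inter.1 h).1]
    exact Nat.lt_succ_self _

/-- Augmentation along a path of items, tracked by the agent `k` who is currently
one item short. -/
lemma exists_augmentation {n : ℕ} {g : Fin n → Finset I → ℕ} (hg : ∀ i, IsMRF (g i))
    {C : Fin n → Finset I} (hC : IsIndepAllocation g C) (a : Fin n → ℕ) {i : Fin n}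
    (hi : a i < (C i).card) (A : Fin n → Finset I) (hA : IsIndepAllocation g A) (k : Fin n)
    (hk : a k ≤ (C k).card)
    (hcard : ∀ j, (A j).card + (if j = k then 1 else 0) = a j + (if j = i then 1 else 0)) :
    ∃ A', IsIndepAllocation g A' ∧
      ((∀ j, (A' j).card = a j + (if j = i then 1 else 0)) ∨
        ∃ l, (C l).card < a l ∧
          ∀ j, (A' j).card + (if j = l then 1 else 0) = a j + (if j = i then 1 else 0)) := by
  have hlt : (A k).card < (C k).card := by
    have h := hcard k
    by_cases hki : k = i
    · subst hki
      simp at h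
      omega
    · simp [hki] at h
      omega
  obtain ⟨x, hxC, hxA, hx⟩ :=
    (hg k).exists_insert_eq_card (hA.eq_card k) (hC.eq_card k) hlt
  have hA' := hA.giveItem hg hx
  have hover := sum_card_inter_lt_giveItem hC.alloc hxC hxA
  have hbound : ∑ j, (giveItem A k x j ∩ C j).card ≤ ∑ j, (C j).card :=
    Finset.sum_le_sum fun j _ => card_le_card inter_subset_right
  by_cases hown : ∃ l, x ∈ A l
  · obtain ⟨l, hl⟩ := hown
    have hlk : l ≠ k := fun h => hxA (h ▸ hl)
    have hcard' : ∀ j, (giveItem A k x j).card + (if j = l then 1 else 0)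
        = a j + (if j = i then 1 else 0) := by
      intro j
      rw [← hcard j]
      unfold giveItem
      by_cases hjk : j = k
      · subst hjk
        simp [hlk.symm, card_insert_of_notMem hxA]
      · by_cases hjl : j = l
        · subst hjl
          simp [hjk, card_erase_add_one hl]
        · have hxj : x ∉ A j := disjoint_left.1 (hA.alloc l j (Ne.symm hjl)) hl
          simp [hjk, hjl, erase_eq_of_notMem hxj]
    by_cases hCl : (C l).card < a l
    · exact ⟨_, hA', Or.inr ⟨l, hCl, hcard'⟩⟩
    · exact exists_augmentation hg hC a hi _ hA' l (not_lt.1 hCl) hcard'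
  · push Not at hown
    refine ⟨_, hA', Or.inl fun j => ?_⟩
    rw [← hcard j]
    unfold giveItem
    by_cases hjk : j = k
    · subst hjk
      simp [card_insert_of_notMem hxA]
    · simp [hjk, erase_eq_of_notMem (hown j)]
termination_by ∑ j, (C j).card - ∑ j, (A j ∩ C j).card
decreasing_by omega

/-! ### Optimality of σ-Lorenz dominating allocations -/

/-- The perturbation added to the utility of agent `i`. -/
noncomputable def priorityShift {n : ℕ} (σ : Equiv.Perm (Fin n)) (i : Fin n) : ℝ :=
  (((σ i : ℕ) : ℝ) + 1) / (n : ℝ) ^ 2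

lemma natCast_add_priorityShift_ne {n : ℕ} (σ : Equiv.Perm (Fin n)) {i j : Fin n}
    (hij : i ≠ j) (x y : ℕ) :
    (x : ℝ) + priorityShift σ i ≠ (y : ℝ) + priorityShift σ j := by
  intro h
  have hσ : (σ i : ℕ) ≠ (σ j : ℕ) := fun e => hij (σ.injective (Fin.ext e))
  have hn : (n : ℝ) ^ 2 ≠ 0 := by
    have : 0 < n := i.pos
    positivity
  unfold priorityShift at h
  replace h := congrArg ((n : ℝ) ^ 2 * ·) h
  simp only [mul_add, mul_div_cancel₀ _ hn] at h
  have h' : n ^ 2 * x + ((σ i : ℕ) + 1) = n ^ 2 * y + ((σ j : ℕ) + 1) := by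
    exact_mod_cast h
  have hi := (σ i).isLt
  have hj := (σ j).isLt
  have hle : n ≤ n ^ 2 := Nat.le_self_pow two_ne_zero n
  have hmod : ((σ i : ℕ) + n ^ 2 * x) % n ^ 2 = ((σ j : ℕ) + n ^ 2 * y) % n ^ 2 := by
    congr 1
    omega
  rw [Nat.add_mul_mod_self_left, Nat.add_mul_mod_self_left,
    Nat.mod_eq_of_lt (hi.trans_le hle), Nat.mod_eq_of_lt (hj.trans_le hle)] at hmod
  exact hσ hmod

lemma IsIndepAllocation.pUtil_eq {n : ℕ} {g : Fin n → Finset I → ℕ} {A : Fin n → Finset I}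
    (hA : IsIndepAllocation g A) (σ : Equiv.Perm (Fin n)) (i : Fin n) :
    pUtil σ g A i = ((A i).card : ℝ) + priorityShift σ i := by
  simp [pUtil, priorityShift, hA.eq_card i]

/-- If agent `i` has fewer items in a σ-Lorenz dominating allocation `A` than in `C`, then
some agent `l` has more items in `A` than in `C`, and taking one item from `l` would put it
below `i`. -/
lemma SigmaLorenzDom.exists_lt {n : ℕ} {σ : Equiv.Perm (Fin n)}
    {g : Fin n → Finset I → ℕ} (hg : ∀ i, IsMRF (g i)) {A C : Fin n → Finset I}
    (hLD : SigmaLorenzDom σ g A) (hA : IsIndepAllocation g A) (hC : IsIndepAllocation g C)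
    {i : Fin n} (hi : (A i).card < (C i).card) :
    ∃ l, (C l).card < (A l).card ∧
      ((A l).card : ℝ) - 1 + priorityShift σ l < (A i).card + priorityShift σ i := by
  obtain ⟨A', hA', hcard | ⟨l, hl, hcard⟩⟩ :=
    exists_augmentation hg hC (fun j => (A j).card) hi A hA i hi.le (fun _ => rfl)
  · refine ((hLD A' hA'.alloc).not_raise (i := i) ?_ fun j hj => ?_).elim
    · rw [hA.pUtil_eq, hA'.pUtil_eq, hcard i]
      simp
    · rw [hA.pUtil_eq, hA'.pUtil_eq, hcard j]
      simp [hj]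
  · have hil : i ≠ l := by
      rintro rfl
      omega
    refine ⟨l, hl, ?_⟩
    have hl' : (A' l).card + 1 = (A l).card := by simpa [hil.symm] using hcard l
    have hi' : (A' i).card = (A i).card + 1 := by simpa [hil] using hcard i
    have hcast : ((A l).card : ℝ) - 1 = (A' l).card := by
      rw [← hl']
      push_cast
      ring
    rw [hcast]
    refine lt_of_le_of_ne (not_lt.1 fun hlt => ?_)
      (natCast_add_priorityShift_ne σ hil.symm _ _)
    refine (hLD A' hA'.alloc).not_transfer (i := i) (k := l) ?_ ?_ fun j hji hjl => ?_
    · rw [hA.pUtil_eq, hA'.pUtil_eq, hi']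
      simp
    · rw [hA.pUtil_eq, hA'.pUtil_eq]
      exact hlt
    · have hj := hcard j
      simp only [hji, hjl, if_false, add_zero] at hj
      rw [hA.pUtil_eq, hA'.pUtil_eq, hj]

lemma isMRF_update_restrictVal {n : ℕ} {f : Fin n → Finset I → ℕ} (hf : ∀ i, IsMRF (f i))
    (p : Fin n) (D : Finset I) (i : Fin n) :
    IsMRF (Function.update f p (restrictVal (f p) D) i) := by
  by_cases hi : i = p
  · subst hi
    rw [Function.update_self]
    exact (hf i).restrictVal D
  · rw [Function.update_of_ne hi]
    exact hf i

/-- Monotonicity of the prioritized egalitarian mechanism: enlarging the restriction set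
of agent `p`'s report from `S` to `T ⊇ S` cannot decrease the number of items
(equivalently, the value) that `p` receives. -/
theorem PE_monotone
    {n : ℕ} {I : Type*} [DecidableEq I] [Fintype I]
    (σ : Equiv.Perm (Fin n))
    (f : Fin n → Finset I → ℕ) (hf : ∀ i, IsMRF (f i))
    (p : Fin n) (S T : Finset I) (hST : S ⊆ T)
    (A : Fin n → Finset I) (hA : IsAllocation A)
    (hNRA : NonRedundant (Function.update f p (restrictVal (f p) S)) A)
    (hLDA : SigmaLorenzDom σ (Function.update f p (restrictVal (f p) S)) A)
    (B : Fin n → Finset I) (hB : IsAllocation B)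
    (hNRB : NonRedundant (Function.update f p (restrictVal (f p) T)) B)
    (hLDB : SigmaLorenzDom σ (Function.update f p (restrictVal (f p) T)) B) :
    (A p).card ≤ (B p).card ∧ f p (A p) ≤ f p (B p) := by
  have hg := isMRF_update_restrictVal hf p S
  have hh := isMRF_update_restrictVal hf p T
  have hAg := hNRA.isIndepAllocation hg hA
  have hBh := hNRB.isIndepAllocation hh hB
  have hAp : restrictVal (f p) S (A p) = (A p).card := by simpa using hAg.eq_card p
  have hBp : restrictVal (f p) T (B p) = (B p).card := by simpa using hBh.eq_card p
  have hAS := (hf p).subset_of_restrictVal_eq_card hAp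
  have hBT := (hf p).subset_of_restrictVal_eq_card hBp
  rw [restrictVal, inter_eq_left.2 hAS] at hAp
  rw [restrictVal, inter_eq_left.2 hBT] at hBp
  rw [hAp, hBp, and_self]
  by_contra! hlt
  have hAh : IsIndepAllocation (Function.update f p (restrictVal (f p) T)) A := by
    refine ⟨hA, fun i => ?_⟩
    by_cases hi : i = p
    · subst hi
      rw [Function.update_self, restrictVal, inter_eq_left.2 (hAS.trans hST), hAp]
    · simpa [hi] using hAg.eq_card i
  have hCg : IsIndepAllocation (Function.update f p (restrictVal (f p) S))
      (Function.update B p ∅) := by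
    refine ⟨fun i j hij => ?_, fun i => ?_⟩
    · by_cases hi : i = p
      · subst hi
        simp
      · by_cases hj : j = p
        · subst hj
          simp
        · simpa [hi, hj] using hB i j hij
    · by_cases hi : i = p
      · subst hi
        simp [restrictVal, (hf i).empty]
      · simpa [hi] using hBh.eq_card i
  let m : Fin n → ℝ := fun i => min ((A i).card : ℝ) (B i).card + priorityShift σ i
  obtain ⟨i, hi, hmin⟩ := Finset.exists_min_image
    (Finset.univ.filter fun i => (A i).card ≠ (B i).card) m ⟨p, by simp [hlt.ne']⟩
  simp only [mem_filter, mem_univ, true_and] at hi hmin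
  rcases lt_or_gt_of_ne hi with hi | hi
  · have hip : i ≠ p := by
      rintro rfl
      omega
    obtain ⟨l, hl, hval⟩ := hLDA.exists_lt hg hAg hCg (i := i) (by simpa [hip] using hi)
    have hBA : (B l).card < (A l).card := by
      by_cases hlp : l = p
      · rwa [hlp]
      · simpa [hlp] using hl
    have hm := hmin l hBA.ne'
    have hBA' : ((B l).card : ℝ) + 1 ≤ (A l).card := by exact_mod_cast hBA
    have hi' : ((A i).card : ℝ) ≤ (B i).card := by exact_mod_cast hi.le
    simp only [m, min_eq_left hi'] at hm
    linarith [min_le_right ((A l).card : ℝ) (B l).card]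
  · obtain ⟨l, hAB, hval⟩ := hLDB.exists_lt hh hBh hAh hi
    have hm := hmin l hAB.ne
    have hAB' : ((A l).card : ℝ) + 1 ≤ (B l).card := by exact_mod_cast hAB
    have hi' : ((B i).card : ℝ) ≤ (A i).card := by exact_mod_cast hi.le
    simp only [m, min_eq_right hi'] at hm
    linarith [min_le_left ((A l).card : ℝ) (B l).card]
end
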